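/- The homology of the underlying chain complex of abelian groups of the dihedral cellular complex C(j)_* is that of the sphere S^{2m−1}: H_n ≅ ℤ for n = 0 and for n = 2m − 1, and H_n = 0 for all other n. -/

import Mathlib

open DihedralGroup Finsupp

noncomputable section

namespace DihedralCell

variable (p : ℕ)

/-- ζ, the rotation of order `p`. -/
def zeta : DihedralGroup p := .r 1

/-- τ, the reflection. -/
def tau : DihedralGroup p := .sr 0

/-- The order-2 subgroup ⟨τ⟩. -/
def Htau : Subgroup (DihedralGroup p) := Subgroup.zpowers (tau p)

/-- Left cosets of ⟨τ⟩. -/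
abbrev Cos := DihedralGroup p ⧸ Htau p

/-- Cell names of the dihedral cellular structure on `S(mγ_j)`: `a0 k q`/`b0 k q` are the
cells `q·a_{k,0}`, `q·b_{k,0}` (indexed by cosets of ⟨τ⟩); `a k l g`, `b k l g` (`1 ≤ l ≤ k-1`)
are the free cells `g·a_{k,l}`, `g·b_{k,l}`; `c k g` is `g·c_k`. -/
inductive CIdx : Type
  | a0 (k : ℕ) (q : Cos p)
  | b0 (k : ℕ) (q : Cos p)
  | a (k l : ℕ) (g : DihedralGroup p)
  | b (k l : ℕ) (g : DihedralGroup p)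
  | c (k : ℕ) (g : DihedralGroup p)

variable {p}

/-- The dimension of a cell. -/
def degC : CIdx p → ℕ
  | .a0 k _ => k - 1
  | .b0 k _ => k - 1
  | .a k l _ => k + l - 1
  | .b k l _ => k + l - 1
  | .c k _ => 2 * k - 1

/-- Validity of a cell index (the junk-free cells), for the sphere `S(mγ)`. -/
def validC (m : ℕ) : CIdx p → Prop
  | .a0 k _ => 1 ≤ k ∧ k ≤ m
  | .b0 k _ => 1 ≤ k ∧ k ≤ m
  | .a k l _ => 1 ≤ l ∧ l ≤ k - 1 ∧ k ≤ m
  | .b k l _ => 1 ≤ l ∧ l ≤ k - 1 ∧ k ≤ m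
  | .c k _ => 1 ≤ k ∧ k ≤ m

/-- The action of the dihedral group on cells. -/
def actC (g' : DihedralGroup p) : CIdx p → CIdx p
  | .a0 k q => .a0 k (g' • q)
  | .b0 k q => .b0 k (g' • q)
  | .a k l g => .a k l (g' * g)
  | .b k l g => .b k l (g' * g)
  | .c k g => .c k (g' * g)

variable (p)

/-- The total module of cellular chains (all degrees together). -/
abbrev ChC := CIdx p →₀ ℤ

/-- The `ℤ`-linear action of `D_{2p}` on chains. -/
def rhoC (g : DihedralGroup p) : ChC p →ₗ[ℤ] ChC p :=
  Finsupp.lmapDomain ℤ ℤ (actC g)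

/-- The submodule of chains of degree `n` (the degree-`n` term of the complex `C(j)`). -/
def Csub (m n : ℕ) : Submodule ℤ (ChC p) :=
  Finsupp.supported ℤ ℤ {i | validC m i ∧ degC i = n}

/-- The boundary of a single cell, following Lemma 2.2 of the paper (for the
representation `γ_j`, i.e. with `ζ_i = ζ^j`). -/
def bndC (j : ℕ) : CIdx p → ChC p
  | .a0 k q => if k ≤ 1 then 0 else single (.a0 (k-1) q) 1 - single (.b0 (k-1) q) 1
  | .b0 k q => if k ≤ 1 then 0 else single (.a0 (k-1) q) 1 - single (.b0 (k-1) q) 1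
  | .c k g =>
      if k ≤ 1 then
        (single (.b0 1 (↑(g * zeta p ^ (j * ((p+1)/2))))) 1 : ChC p) - single (.a0 1 ↑g) 1
      else
        single (.a k (k-1) g) (-1) + single (.a k (k-1) (g * tau p)) ((-1)^k)
        + single (.b k (k-1) (g * zeta p ^ (j * ((p+1)/2)))) 1
        + single (.b k (k-1) (g * zeta p ^ (j * ((p+1)/2)) * tau p)) ((-1)^(k-1))
  | .a k l g =>
      if l = 0 then 0
      else if l = k - 1 then
        (if k = 2 then (single (.a0 k (↑g : Cos p)) (-1) : ChC p)
         else single (.a k (k-2) g) (-1) + single (.a k (k-2) (g * tau p)) ((-1)^(k-1)))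
        + single (.c (k-1) g) (-1)
        - ∑ t ∈ Finset.range ((p-1)/2), single (.c (k-1) (g * zeta p ^ (j * (t+1)))) 1
        + ∑ t ∈ Finset.range ((p-1)/2),
            single (.c (k-1) (g * zeta p ^ (j * (t+1)) * tau p)) ((-1)^(k-2))
      else if l = 1 then
        single (.a (k-1) 1 g) 1 - single (.b (k-1) 1 g) 1 + single (.a0 k (↑g : Cos p)) ((-1)^(k-1))
      else
        single (.a (k-1) l g) 1 - single (.b (k-1) l g) 1
        + single (.a k (l-1) g) ((-1)^(k-l)) + single (.a k (l-1) (g * tau p)) ((-1)^(k-1))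
  | .b k l g =>
      if l = 0 then 0
      else if l = k - 1 then
        (if k = 2 then (single (.b0 k (↑g : Cos p)) (-1) : ChC p)
         else single (.b k (k-2) g) (-1) + single (.b k (k-2) (g * tau p)) ((-1)^(k-1)))
        + single (.c (k-1) g) (-1)
        - ∑ t ∈ Finset.range ((p-1)/2), single (.c (k-1) (g * zeta p ^ (j * (t+1)))) 1
        + ∑ t ∈ Finset.range ((p-1)/2),
            single (.c (k-1) (g * zeta p ^ (j * (t+1)) * tau p)) ((-1)^(k-2))
      else if l = 1 then
        single (.a (k-1) 1 g) 1 - single (.b (k-1) 1 g) 1 + single (.b0 k (↑g : Cos p)) ((-1)^(k-1))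
      else
        single (.a (k-1) l g) 1 - single (.b (k-1) l g) 1
        + single (.b k (l-1) g) ((-1)^(k-l)) + single (.b k (l-1) (g * tau p)) ((-1)^(k-1))

/-- The differential of the dihedral cellular complex `C(j)`. -/
def DC (j : ℕ) : ChC p →ₗ[ℤ] ChC p :=
  Finsupp.lift (ChC p) ℤ (CIdx p) (bndC p j)

/-- The submodule of `D_{2p}`-invariant chains of degree `n`. -/
def InvC (m n : ℕ) : Submodule ℤ (ChC p) :=
  Csub p m n ⊓ (⨅ g : DihedralGroup p, LinearMap.ker (rhoC p g - LinearMap.id))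

/-- Cycles of degree `n` of the underlying complex of abelian groups. -/
def ZcC (m j n : ℕ) : Submodule ℤ (ChC p) := Csub p m n ⊓ LinearMap.ker (DC p j)

/-- Degree-`n` homology of the underlying complex of abelian groups of `C(j)`. -/
def HcC (m j n : ℕ) : Type :=
  ↥(ZcC p m j n) ⧸ Submodule.comap (ZcC p m j n).subtype
    (Submodule.map (DC p j) (Csub p m (n+1)))

instance (m j n : ℕ) : AddCommGroup (HcC p m j n) :=
  inferInstanceAs (AddCommGroup (↥(ZcC p m j n) ⧸ Submodule.comap (ZcC p m j n).subtype
    (Submodule.map (DC p j) (Csub p m (n+1)))))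

instance (m j n : ℕ) : Module ℤ (HcC p m j n) :=
  inferInstanceAs (Module ℤ (↥(ZcC p m j n) ⧸ Submodule.comap (ZcC p m j n).subtype
    (Submodule.map (DC p j) (Csub p m (n+1)))))

/-- Cycles of degree `n` of the complex of `D_{2p}`-invariants `(C(j))^{D_{2p}}`. -/
def ZinvC (m j n : ℕ) : Submodule ℤ (ChC p) := InvC p m n ⊓ LinearMap.ker (DC p j)

/-- Degree-`n` homology of the complex of `D_{2p}`-invariants of `C(j)`. -/
def HinvC (m j n : ℕ) : Type :=
  ↥(ZinvC p m j n) ⧸ Submodule.comap (ZinvC p m j n).subtype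
    (Submodule.map (DC p j) (InvC p m (n+1)))

instance (m j n : ℕ) : AddCommGroup (HinvC p m j n) :=
  inferInstanceAs (AddCommGroup (↥(ZinvC p m j n) ⧸ Submodule.comap (ZinvC p m j n).subtype
    (Submodule.map (DC p j) (InvC p m (n+1)))))

instance (m j n : ℕ) : Module ℤ (HinvC p m j n) :=
  inferInstanceAs (Module ℤ (↥(ZinvC p m j n) ⧸ Submodule.comap (ZinvC p m j n).subtype
    (Submodule.map (DC p j) (InvC p m (n+1)))))

/-- The dual module: `ℤ`-linear functionals on chains. -/
abbrev DualC := ChC p →ₗ[ℤ] ℤ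

/-- Degree-`n` cochains of `Hom_{ℤ[D_{2p}]}(C(j), ℤ)`: `D_{2p}`-equivariant functionals
(`ℤ` with the trivial action) supported on the degree-`n` cells. -/
def KcoC (m n : ℕ) : Submodule ℤ (DualC p) :=
  (⨅ i : {i : CIdx p // ¬(validC m i ∧ degC i = n)},
      LinearMap.ker (LinearMap.applyₗ (single i.1 1)))
  ⊓ (⨅ g : DihedralGroup p, LinearMap.ker (LinearMap.lcomp ℤ ℤ (rhoC p g) - LinearMap.id))

open Classical in
/-- Projection of the total chain module onto its degree-`n` summand. -/
def projC (m n : ℕ) : ChC p →ₗ[ℤ] ChC p :=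
  Finsupp.lift (ChC p) ℤ (CIdx p)
    (fun i => if validC m i ∧ degC i = n then single i 1 else 0)

/-- The coboundary taking a degree-`n` cochain `f` to the degree-`(n+1)` cochain
`f ∘ d` (precomposition with the differential out of degree `n+1`). -/
def cobdC (m j n : ℕ) : DualC p →ₗ[ℤ] DualC p :=
  LinearMap.lcomp ℤ ℤ ((DC p j).comp (projC p m (n+1)))

/-- Degree-`n` cocycles of `Hom_{ℤ[D_{2p}]}(C(j), ℤ)`. -/
def ZcoC (m j n : ℕ) : Submodule ℤ (DualC p) := KcoC p m n ⊓ LinearMap.ker (cobdC p m j n)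

/-- Degree-`n` cohomology of the cochain complex `Hom_{ℤ[D_{2p}]}(C(j), ℤ)`. -/
def HcoC (m j n : ℕ) : Type :=
  ↥(ZcoC p m j n) ⧸ Submodule.comap (ZcoC p m j n).subtype
    (Submodule.map (cobdC p m j (n-1)) (KcoC p m (n-1)))

instance (m j n : ℕ) : AddCommGroup (HcoC p m j n) :=
  inferInstanceAs (AddCommGroup (↥(ZcoC p m j n) ⧸ Submodule.comap (ZcoC p m j n).subtype
    (Submodule.map (cobdC p m j (n-1)) (KcoC p m (n-1)))))

instance (m j n : ℕ) : Module ℤ (HcoC p m j n) :=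
  inferInstanceAs (Module ℤ (↥(ZcoC p m j n) ⧸ Submodule.comap (ZcoC p m j n).subtype
    (Submodule.map (cobdC p m j (n-1)) (KcoC p m (n-1)))))


end DihedralCell

end


open DihedralGroup Finsupp

noncomputable section

namespace DihedralCell

/-- The integral group ring. -/
abbrev GR (p : ℕ) := MonoidAlgebra ℤ (DihedralGroup p)

/-- Inclusion of group elements in the group ring. -/
def el {p : ℕ} (g : DihedralGroup p) : GR p := MonoidAlgebra.single g 1

/-- ω = ζ^{j(p+1)/2} -/
def omg (p j : ℕ) : DihedralGroup p := zeta p ^ (j * ((p+1)/2))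

def TT (p : ℕ) : GR p := el (tau p)
def om (p j : ℕ) : GR p := el (omg p j)
def om' (p j : ℕ) : GR p := el (omg p j)⁻¹
def sg (p j : ℕ) : GR p := ∑ t ∈ Finset.range ((p-1)/2), el (zeta p ^ (j * (t+1)))
def Nn (p : ℕ) (e : ℤ) : GR p := 1 - e • TT p
def ss (p j : ℕ) (e : ℤ) : GR p := -(1 + sg p j) - e • (sg p j * TT p)

section alg
variable {p : ℕ}

lemma el_mul (g h : DihedralGroup p) : el (g * h) = el g * el h := by
  simp [el, MonoidAlgebra.single_mul_single]

lemma el_one : el (1 : DihedralGroup p) = 1 := rfl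

lemma el_pow (g : DihedralGroup p) (n : ℕ) : el (g ^ n) = el g ^ n := by
  induction n with
  | zero => simp [el_one]
  | succ n ih => rw [pow_succ, pow_succ, el_mul, ih]

lemma coeff_mul_el (x : GR p) (g h : DihedralGroup p) :
    (x * el g).coeff h = x.coeff (h * g⁻¹) := by
  simp [el, MonoidAlgebra.coeff_mul_single_apply]

lemma coeff_el_mul (x : GR p) (g h : DihedralGroup p) :
    (el g * x).coeff h = x.coeff (g⁻¹ * h) := by
  simp [el, MonoidAlgebra.coeff_single_mul_apply]

lemma omg_eq (j : ℕ) : omg p j = r ((j * ((p+1)/2) : ℕ) : ZMod p) := by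
  simp [omg, zeta]

lemma tau_mul_omg (j : ℕ) : tau p * omg p j = (omg p j)⁻¹ * tau p := by
  rw [omg_eq]; simp [tau]

lemma tau_inv : (tau p)⁻¹ = tau p := by simp [tau]

lemma T_T : TT p * TT p = 1 := by
  rw [TT, ← el_mul, ← el_one]; simp [tau]

lemma T_om (j : ℕ) : TT p * om p j = om' p j * TT p := by
  rw [TT, om, om', ← el_mul, ← el_mul, tau_mul_omg]

lemma T_om' (j : ℕ) : TT p * om' p j = om p j * TT p := by
  rw [TT, om, om', ← el_mul, ← el_mul]
  congr 1
  rw [omg_eq]; simp [tau]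

lemma om_om' (j : ℕ) : om p j * om' p j = 1 := by
  rw [om, om', ← el_mul]; simp [el_one]

lemma om'_om (j : ℕ) : om' p j * om p j = 1 := by
  rw [om, om', ← el_mul]; simp [el_one]

lemma zeta_pow_p : zeta p ^ p = 1 := by
  simp [zeta]

lemma omg_pow_p (j : ℕ) : omg p j ^ p = 1 := by
  rw [omg, ← pow_mul, mul_comm, pow_mul, zeta_pow_p, one_pow]

lemma omg_sq (hodd : Odd p) (j : ℕ) : omg p j ^ 2 = zeta p ^ j := by
  obtain ⟨q, rfl⟩ := hodd
  rw [omg, ← pow_mul]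
  have : j * ((2 * q + 1 + 1) / 2) * 2 = (2*q+1) * j + j := by
    have : (2 * q + 1 + 1) / 2 = q + 1 := by omega
    rw [this]; ring
  rw [this, pow_add, pow_mul, zeta_pow_p, one_pow, one_mul]

lemma om_pow_p (j : ℕ) : om p j ^ p = 1 := by
  rw [om, ← el_pow, omg_pow_p, el_one]

lemma sg_eq (hodd : Odd p) (j : ℕ) :
    sg p j = ∑ t ∈ Finset.range ((p-1)/2), om p j ^ (2 * (t+1)) := by
  unfold sg
  refine Finset.sum_congr rfl fun t _ => ?_
  rw [om, ← el_pow, pow_mul (omg p j), omg_sq hodd, pow_mul]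

lemma sg_om (hodd : Odd p) (j : ℕ) :
    sg p j * om p j - sg p j * om' p j = 1 - om p j := by
  rw [sg_eq hodd, Finset.sum_mul, Finset.sum_mul, ← Finset.sum_sub_distrib]
  have h : ∀ t ∈ Finset.range ((p-1)/2),
      om p j ^ (2 * (t+1)) * om p j - om p j ^ (2 * (t+1)) * om' p j
        = om p j ^ (2 * (t+1) + 1) - om p j ^ (2 * t + 1) := by
    intro t _
    rw [pow_succ, show 2 * (t+1) = 2 * t + 1 + 1 by ring, pow_succ _ (2*t+1), mul_assoc _ _ (om' p j),
      om_om', mul_one]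
  rw [Finset.sum_congr rfl h, Finset.sum_range_sub (fun t => om p j ^ (2 * t + 1))]
  have : 2 * ((p-1)/2) + 1 = p := by obtain ⟨q, rfl⟩ := hodd; omega
  rw [this, om_pow_p]; simp

lemma T_Nn {e : ℤ} (he : e * e = 1) : TT p * Nn p e = -(e • Nn p e) := by
  rw [Nn, mul_sub, mul_one, mul_smul_comm, T_T, smul_sub, smul_smul, he]
  simp

lemma Nn_T {e : ℤ} (he : e * e = 1) : Nn p e * TT p = -(e • Nn p e) := by
  rw [Nn, sub_mul, one_mul, smul_mul_assoc, T_T, smul_sub, smul_smul, he]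
  simp

lemma Nn_neg {e : ℤ} (he : e * e = 1) : Nn p (-e) * Nn p e = 0 := by
  rw [show Nn p (-e) = 1 + e • TT p by simp [Nn], add_mul, smul_mul_assoc, T_Nn he, smul_neg,
    smul_smul, he]
  simp

lemma ss_Nn (j : ℕ) {e : ℤ} (he : e * e = 1) : ss p j e * Nn p e = - Nn p e := by
  rw [ss, sub_mul, smul_mul_assoc, mul_assoc, T_Nn he, mul_neg, mul_smul_comm, smul_neg,
    smul_smul, he]
  noncomm_ring

lemma ss_om_Nn (hodd : Odd p) (j : ℕ) {e : ℤ} (he : e * e = 1) :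
    ss p j e * om p j * Nn p e = - Nn p e := by
  have h1 : sg p j * TT p * om p j * Nn p e = -(e • (sg p j * om' p j * Nn p e)) := by
    rw [mul_assoc (sg p j), T_om, mul_assoc, mul_assoc, T_Nn he]
    simp only [mul_neg, mul_smul_comm, mul_assoc]
  rw [ss, sub_mul, sub_mul, smul_mul_assoc, smul_mul_assoc, h1, smul_neg, smul_smul, he]
  have h2 := congrArg (· * Nn p e) (sg_om hodd j)
  simp only [sub_mul, one_mul] at h2
  rw [one_smul, neg_mul, neg_mul, add_mul, add_mul, one_mul, sub_neg_eq_add,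
    ← sub_eq_zero]
  rw [← sub_eq_zero] at h2
  rw [← neg_eq_zero, ← h2]
  abel

lemma omg_gen (hp : p.Prime) (hodd : Odd p) {j : ℕ} (hj1 : 1 ≤ j) (hj2 : j ≤ p - 1) (i : ZMod p) :
    ∃ n : ℕ, omg p j ^ n = r i := by
  have : Fact p.Prime := ⟨hp⟩
  have hne : ((j * ((p+1)/2) : ℕ) : ZMod p) ≠ 0 := by
    intro h
    rw [ZMod.natCast_eq_zero_iff] at h
    have hp3 := hp.two_le
    obtain ⟨q, hq⟩ := hodd
    rcases (Nat.Prime.dvd_mul hp).1 h with h | h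
    · have := Nat.le_of_dvd (by omega) h; omega
    · have := Nat.le_of_dvd (by omega) h; omega
  refine ⟨(i * (((j * ((p+1)/2) : ℕ) : ZMod p))⁻¹).val, ?_⟩
  rw [omg_eq, r_pow]
  congr 1
  rw [ZMod.natCast_val, ZMod.cast_id, mul_comm, mul_assoc, inv_mul_cancel₀ hne, mul_one]

lemma cyc_inv (hodd : Odd p) {j : ℕ} {e : ℤ} (he : e * e = 1) {x : GR p}
    (h1 : x * Nn p e = 0) (h2 : x * om p j * Nn p e = 0) :
    x * TT p = e • x ∧ x * om p j = x := by
  have a1 : x * TT p = e • x := by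
    rw [Nn, mul_sub, mul_one, mul_smul_comm, sub_eq_zero] at h1
    conv_rhs => rw [h1, smul_smul, he, one_smul]
  have a2 : x * om p j = x * om' p j := by
    rw [Nn, mul_sub, mul_one, mul_smul_comm, sub_eq_zero] at h2
    have : x * om' p j = e • (x * om p j * TT p) := by
      have h3 : om p j * TT p = TT p * om' p j := (T_om' j).symm
      rw [mul_assoc, h3, ← mul_assoc, a1, smul_mul_assoc, smul_smul, he, one_smul]
    rw [this, ← h2]
  refine ⟨a1, ?_⟩
  have a3 : x * om p j ^ 2 = x := by
    rw [pow_two, ← mul_assoc, a2, mul_assoc, om'_om, mul_one]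
  have a4 : ∀ n : ℕ, x * (om p j ^ 2) ^ n = x := by
    intro n
    induction n with
    | zero => simp
    | succ n ih => rw [pow_succ, ← mul_assoc, ih, a3]
  have a5 := a4 ((p+1)/2)
  rw [← pow_mul] at a5
  have : 2 * ((p+1)/2) = p + 1 := by obtain ⟨q, rfl⟩ := hodd; omega
  rwa [this, pow_succ, om_pow_p, one_mul] at a5

lemma cyc_zero (hp : p.Prime) (hodd : Odd p) {j : ℕ} (hj1 : 1 ≤ j) (hj2 : j ≤ p - 1)
    {e : ℤ} (he : e * e = 1) {x : GR p}
    (h1 : x * Nn p e = 0) (h2 : x * om p j * Nn p e = 0) (h0 : x.coeff 1 = 0) : x = 0 := by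
  obtain ⟨a1, a2⟩ := cyc_inv hodd he h1 h2
  have a3 : ∀ n : ℕ, x * om p j ^ n = x := by
    intro n
    induction n with
    | zero => simp
    | succ n ih => rw [pow_succ, ← mul_assoc, ih, a2]
  have hr : ∀ i, x.coeff (r i) = 0 := by
    intro i
    obtain ⟨n, hn⟩ := omg_gen hp hodd hj1 hj2 i
    rw [← a3 n, om, ← el_pow, coeff_mul_el, hn]
    simpa using h0
  ext g
  cases g with
  | r i => simpa using hr i
  | sr i =>
    have := congrArg (fun y : GR p => y.coeff (sr i)) a1
    simp only [TT, coeff_mul_el, tau_inv] at this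
    rw [show (sr i * tau p) = r (-i) by simp [tau], hr] at this
    have h4 : e * x.coeff (sr i) = 0 := by exact this.symm
    have : e * (e * x.coeff (sr i)) = 0 := by rw [h4, mul_zero]
    rw [← mul_assoc, he, one_mul] at this
    simpa using this

/-- is it a rotation -/
def isRot : DihedralGroup p → Bool
  | r _ => true
  | sr _ => false

/-- restriction to rotations -/
def rot (x : GR p) : GR p := ⟨x.coeff.filter (fun g => isRot g = true)⟩

lemma rot_r (x : GR p) (i : ZMod p) : (rot x).coeff (r i) = x.coeff (r i) :=
  Finsupp.filter_apply_pos _ _ rfl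

lemma rot_sr (x : GR p) (i : ZMod p) : (rot x).coeff (sr i) = 0 :=
  Finsupp.filter_apply_neg _ _ (by simp [isRot])

lemma Nn_exact {e : ℤ} (he : e * e = 1) {x : GR p} (h : x * Nn p e = 0) :
    ∃ u, x = u * Nn p (-e) := by
  classical
  rw [Nn, mul_sub, mul_one, mul_smul_comm, sub_eq_zero] at h
  refine ⟨rot x, ?_⟩
  rw [show Nn p (-e) = 1 + e • TT p by simp [Nn], mul_add, mul_one, mul_smul_comm]
  ext g
  have hg := congrArg (fun y : GR p => y.coeff g) h
  simp only [TT, MonoidAlgebra.coeff_smul, Finsupp.smul_apply, coeff_mul_el, tau_inv] at hg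
  simp only [TT, MonoidAlgebra.coeff_add, Finsupp.add_apply, MonoidAlgebra.coeff_smul,
    Finsupp.smul_apply, coeff_mul_el, tau_inv]
  cases g with
  | r i => simp [rot_r, rot_sr, tau]
  | sr i => rw [hg]; simp [rot_r, rot_sr, tau]

lemma coeff_sg_one (hp : p.Prime) {j : ℕ} (hj1 : 1 ≤ j) (hj2 : j ≤ p - 1) :
    (sg p j).coeff 1 = 0 := by
  have h2 := hp.two_le
  rw [sg, MonoidAlgebra.coeff_sum, Finsupp.finsetSum_apply]
  refine Finset.sum_eq_zero fun t ht => ?_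
  rw [Finset.mem_range] at ht
  have : zeta p ^ (j * (t+1)) ≠ 1 := by
    rw [zeta, r_one_pow, one_def, Ne, r.injEq, ZMod.natCast_eq_zero_iff, hp.dvd_mul]
    rintro (h | h)
    · have := Nat.le_of_dvd (by omega) h; omega
    · have := Nat.le_of_dvd (by omega) h; omega
  simp [el, Finsupp.single_apply, this]

lemma coeff_sg_sr {j : ℕ} (i : ZMod p) : (sg p j).coeff (sr i) = 0 := by
  rw [sg, MonoidAlgebra.coeff_sum, Finsupp.finsetSum_apply]
  refine Finset.sum_eq_zero fun t ht => ?_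
  simp [el, Finsupp.single_apply, zeta]

lemma coeff_w (hp : p.Prime) {j : ℕ} (hj1 : 1 ≤ j) (hj2 : j ≤ p - 1)
    {e : ℤ} (he : e * e = 1) : (Nn p (-e) * ss p j e).coeff 1 = -1 := by
  rw [show Nn p (-e) = 1 + e • TT p by simp [Nn], add_mul, one_mul, smul_mul_assoc]
  simp only [MonoidAlgebra.coeff_add, Finsupp.add_apply, MonoidAlgebra.coeff_smul,
    Finsupp.smul_apply, TT, coeff_el_mul, tau_inv, mul_one, ss, MonoidAlgebra.coeff_sub,
    MonoidAlgebra.coeff_neg, Finsupp.sub_apply, Finsupp.neg_apply, coeff_mul_el, one_mul]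
  rw [coeff_sg_one hp hj1 hj2, show tau p = sr 0 from rfl, coeff_sg_sr]
  rw [show (sr 0 * sr 0 : DihedralGroup p) = 1 by simp, coeff_sg_one hp hj1 hj2]
  rw [← el_one]
  simp only [el, MonoidAlgebra.coeff_single, one_def]
  have : (r 0 : DihedralGroup p) ≠ sr 0 := by intro h; cases h
  rw [Finsupp.single_apply, Finsupp.single_apply, if_pos rfl, if_neg this]
  simp

lemma w_cyc1 (j : ℕ) {e : ℤ} (he : e * e = 1) (y : GR p) :
    (y * (Nn p (-e) * ss p j e)) * Nn p e = 0 := by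
  rw [mul_assoc, mul_assoc, ss_Nn j he, mul_neg, Nn_neg he]; simp

lemma w_cyc2 (hodd : Odd p) (j : ℕ) {e : ℤ} (he : e * e = 1) (y : GR p) :
    (y * (Nn p (-e) * ss p j e)) * om p j * Nn p e = 0 := by
  rw [mul_assoc, mul_assoc, mul_assoc, ← mul_assoc (ss p j e), ss_om_Nn hodd j he, mul_neg,
    Nn_neg he]; simp

lemma om_w (hp : p.Prime) (hodd : Odd p) {j : ℕ} (hj1 : 1 ≤ j) (hj2 : j ≤ p - 1)
    {e : ℤ} (he : e * e = 1) :
    om p j * (Nn p (-e) * ss p j e) = Nn p (-e) * ss p j e := by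
  rw [← sub_eq_zero]
  have h1 := w_cyc1 (p := p) j he (om p j - 1)
  have h2 := w_cyc2 hodd j he (om p j - 1)
  rw [sub_mul, one_mul] at h1 h2
  refine cyc_zero hp hodd hj1 hj2 he h1 h2 ?_
  have h3 := (cyc_inv hodd he (w_cyc1 (p := p) j he 1) (w_cyc2 hodd j he 1)).2
  rw [one_mul] at h3
  rw [MonoidAlgebra.coeff_sub, Finsupp.sub_apply, sub_eq_zero]
  conv_rhs => rw [← h3]
  rw [om, coeff_mul_el, coeff_el_mul, one_mul, mul_one]

end alg

end DihedralCell

end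

open DihedralGroup Finsupp

noncomputable section

namespace DihedralCell

section chains
variable {p : ℕ}

/-- Names of the cells in the two rows: `true` for `a`, `false` for `b`. -/
def cell (β : Bool) (k l : ℕ) (g : DihedralGroup p) : CIdx p :=
  match β, l with
  | true, 0 => .a0 k (g : Cos p)
  | false, 0 => .b0 k (g : Cos p)
  | true, l+1 => .a k (l+1) g
  | false, l+1 => .b k (l+1) g

/-- `x ↦ x · a_{k,l}` resp. `x · b_{k,l}`. -/
def E (p : ℕ) (β : Bool) (k l : ℕ) : GR p →ₗ[ℤ] ChC p :=
  (Finsupp.lmapDomain ℤ ℤ (cell β k l)) ∘ₗ (MonoidAlgebra.coeffLinearEquiv ℤ).toLinearMap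

/-- `x ↦ x · c_k`. -/
def Ec (p : ℕ) (k : ℕ) : GR p →ₗ[ℤ] ChC p :=
  (Finsupp.lmapDomain ℤ ℤ (CIdx.c k)) ∘ₗ (MonoidAlgebra.coeffLinearEquiv ℤ).toLinearMap

lemma E_el (β : Bool) (k l : ℕ) (g : DihedralGroup p) :
    E p β k l (el g) = single (cell β k l g) 1 := by
  simp [E, el, MonoidAlgebra.coeffLinearEquiv]

lemma Ec_el (k : ℕ) (g : DihedralGroup p) :
    Ec p k (el g) = single (CIdx.c k g) 1 := by
  simp [Ec, el, MonoidAlgebra.coeffLinearEquiv]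

lemma gr_ind {P : GR p → Prop} (x : GR p) (h1 : ∀ g, P (el g)) (hadd : ∀ x y, P x → P y → P (x + y))
    (hs : ∀ (n : ℤ) x, P x → P (n • x)) : P x := by
  induction x using MonoidAlgebra.induction_linear with
  | zero => simpa using hs 0 _ (h1 1)
  | add x y hx hy => exact hadd x y hx hy
  | single g n =>
    have : (MonoidAlgebra.single g n : GR p) = n • el g := by
      simp [el, MonoidAlgebra.smul_single]
    rw [this]; exact hs n _ (h1 g)

lemma lin_ext {M : Type*} [AddCommGroup M] (f f' : GR p →ₗ[ℤ] M)
    (h : ∀ g, f (el g) = f' (el g)) (x : GR p) : f x = f' x := by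
  refine gr_ind (P := fun x => f x = f' x) x h ?_ ?_
  · intro x y hx hy; rw [map_add, map_add, hx, hy]
  · intro n x hx; rw [map_smul, map_smul, hx]

lemma DC_single (j : ℕ) (c : CIdx p) : DC p j (single c 1) = bndC p j c := by
  simp [DC]

/-- The row coefficients. -/
def Mm (p l : ℕ) : GR p := if l = 0 then 1 else Nn p ((-1)^(l+1))

lemma Mm_zero : Mm p 0 = 1 := rfl
lemma Mm_succ (l : ℕ) : Mm p (l+1) = Nn p ((-1)^(l+2)) := by simp [Mm]

lemma el_Nn (g : DihedralGroup p) (e : ℤ) : el g * Nn p e = el g - e • el (g * tau p) := by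
  rw [Nn, mul_sub, mul_one, mul_smul_comm, TT, el_mul]

/-- difference of rows. -/
def Df (p k l : ℕ) : GR p →ₗ[ℤ] ChC p := E p true k l - E p false k l

lemma Df_apply (k l : ℕ) (x : GR p) : Df p k l x = E p true k l x - E p false k l x := rfl

lemma D_E_one_zero (j : ℕ) (β : Bool) (x : GR p) : DC p j (E p β 1 0 x) = 0 := by
  refine lin_ext (DC p j ∘ₗ E p β 1 0) 0 (fun g => ?_) x
  rw [LinearMap.comp_apply, E_el, DC_single]
  cases β <;> simp [cell, bndC]

lemma D_E_zero (j : ℕ) (β : Bool) (k : ℕ) (x : GR p) :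
    DC p j (E p β (k+2) 0 x) = Df p (k+1) 0 x := by
  refine lin_ext (DC p j ∘ₗ E p β (k+2) 0) (Df p (k+1) 0) (fun g => ?_) x
  rw [LinearMap.comp_apply, E_el, DC_single, Df_apply, E_el, E_el]
  cases β <;> simp [cell, bndC]

lemma single_smul' (c : CIdx p) (n : ℤ) : (single c n : ChC p) = n • single c 1 := by simp

lemma D_E_mid (j : ℕ) (β : Bool) (k l : ℕ) (h : l + 1 < k) (x : GR p) :
    DC p j (E p β (k+1) (l+1) x) =
      ((-1)^(k-l) : ℤ) • E p β (k+1) l (x * Mm p l) + Df p k (l+1) x := by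
  refine lin_ext (DC p j ∘ₗ E p β (k+1) (l+1))
    (((-1)^(k-l) : ℤ) • (E p β (k+1) l ∘ₗ LinearMap.mulRight ℤ (Mm p l)) + Df p k (l+1))
    (fun g => ?_) x
  simp only [LinearMap.comp_apply, LinearMap.add_apply, LinearMap.smul_apply,
    LinearMap.mulRight_apply]
  rw [E_el, DC_single, Df_apply, E_el, E_el]
  obtain ⟨d, rfl⟩ : ∃ d, k = l + 2 + d := ⟨k - (l+2), by omega⟩
  have hd : l + 2 + d - l = d + 2 := by omega
  rw [hd]
  cases l with
  | zero =>
    rw [Mm_zero, mul_one, E_el]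
    cases β <;>
    · simp only [cell, bndC]
      rw [if_neg (by omega), if_neg (by omega), if_pos (by trivial)]
      simp only [Nat.add_sub_cancel]
      rw [single_smul' _ ((-1)^_), show 0 + 2 + d = d + 2 by omega]
      abel
  | succ l =>
    rw [Mm_succ, el_Nn, map_sub, map_smul, E_el, E_el]
    cases β <;>
    · simp only [cell, bndC]
      rw [if_neg (by omega), if_neg (by omega), if_neg (by omega)]
      simp only [Nat.add_sub_cancel]
      rw [single_smul' _ ((-1)^_), single_smul' _ ((-1)^(l+1+2+d)),
        show l + 1 + 2 + d + 1 - (l + 1 + 1) = d + 2 by omega, smul_sub, smul_smul,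
        show ((-1)^(l+1+2+d) : ℤ) = -((-1)^(d+2) * (-1)^(l+2)) by ring, neg_smul]
      abel

lemma D_E_top (j : ℕ) (β : Bool) (l : ℕ) (x : GR p) :
    DC p j (E p β (l+2) (l+1) x) =
      - E p β (l+2) l (x * Mm p l) + Ec p (l+1) (x * ss p j ((-1)^(l+1))) := by
  refine lin_ext (DC p j ∘ₗ E p β (l+2) (l+1))
    (-(E p β (l+2) l ∘ₗ LinearMap.mulRight ℤ (Mm p l))
      + Ec p (l+1) ∘ₗ LinearMap.mulRight ℤ (ss p j ((-1)^(l+1))))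
    (fun g => ?_) x
  simp only [LinearMap.comp_apply, LinearMap.add_apply, LinearMap.neg_apply,
    LinearMap.mulRight_apply]
  rw [E_el, DC_single]
  have hs : Ec p (l+1) (el g * ss p j ((-1)^(l+1))) =
      single (.c (l+1) g) (-1)
        - ∑ t ∈ Finset.range ((p-1)/2), single (.c (l+1) (g * zeta p ^ (j * (t+1)))) 1
        + ∑ t ∈ Finset.range ((p-1)/2),
            single (.c (l+1) (g * zeta p ^ (j * (t+1)) * tau p)) ((-1)^l) := by
    have h1 : el g * ss p j ((-1)^(l+1)) =
        -el g - ∑ t ∈ Finset.range ((p-1)/2), el (g * zeta p ^ (j * (t+1)))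
        + ∑ t ∈ Finset.range ((p-1)/2),
            ((-1)^l : ℤ) • el (g * zeta p ^ (j * (t+1)) * tau p) := by
      rw [ss, mul_sub, mul_neg, mul_add, mul_one, mul_smul_comm, sg, Finset.mul_sum,
        Finset.sum_mul, Finset.mul_sum, pow_succ, mul_neg_one, neg_smul, Finset.smul_sum,
        sub_neg_eq_add, neg_add, ← sub_eq_add_neg]
      simp only [TT, el_mul, mul_assoc]
    rw [h1, map_add, map_sub, map_neg, map_sum, map_sum, Ec_el, ← single_neg]
    simp only [map_smul, Ec_el, ← single_smul']
  rw [hs]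
  cases l with
  | zero =>
    rw [Mm_zero, mul_one, E_el]
    cases β <;>
    · simp only [cell, bndC]
      rw [if_neg (by omega), if_pos (by trivial), if_pos (by trivial)]
      rw [single_neg]
      simp only [Nat.add_sub_cancel, ← single_neg]
      abel
  | succ l =>
    rw [Mm_succ, el_Nn, map_sub, map_smul, E_el, E_el]
    cases β <;>
    · simp only [cell, bndC]
      rw [if_neg (by omega), if_pos (by omega), if_neg (by omega)]
      simp only [show l + 1 + 2 - 1 = l + 2 by omega, show l + 1 + 2 - 2 = l + 1 by omega,
        show l + 1 + 1 = l + 2 by omega]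
      rw [neg_sub, ← single_smul', single_neg _ (1:ℤ)]
      abel

lemma D_Ec (j : ℕ) (k : ℕ) (x : GR p) :
    DC p j (Ec p (k+1) x) =
      - E p true (k+1) k (x * Mm p k) + E p false (k+1) k (x * om p j * Mm p k) := by
  refine lin_ext (DC p j ∘ₗ Ec p (k+1))
    (-(E p true (k+1) k ∘ₗ LinearMap.mulRight ℤ (Mm p k))
      + E p false (k+1) k ∘ₗ LinearMap.mulRight ℤ (Mm p k) ∘ₗ LinearMap.mulRight ℤ (om p j))
    (fun g => ?_) x
  simp only [LinearMap.comp_apply, LinearMap.add_apply, LinearMap.neg_apply,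
    LinearMap.mulRight_apply]
  rw [Ec_el, DC_single, om, ← el_mul]
  cases k with
  | zero =>
    rw [Mm_zero, mul_one, mul_one, E_el, E_el]
    simp only [cell, bndC, omg]
    rw [if_pos (by omega)]
    abel
  | succ k =>
    rw [Mm_succ, el_Nn, el_Nn, map_sub, map_smul, E_el, E_el, map_sub, map_smul, E_el, E_el]
    simp only [cell, bndC, omg]
    rw [if_neg (by omega)]
    simp only [show k + 1 + 1 = k + 2 by omega, show k + 2 - 1 = k + 1 by omega]
    rw [single_neg _ (1:ℤ), single_smul' _ ((-1)^(k+2)), single_smul' _ ((-1)^(k+1)),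
      show ((-1)^(k+1) : ℤ) = -(-1)^(k+2) by ring, neg_smul]
    abel

end chains

end DihedralCell

end

open DihedralGroup Finsupp

noncomputable section

namespace DihedralCell

section chains
variable {p : ℕ}

lemma sgn_sq (k : ℕ) : ((-1)^k : ℤ) * (-1)^k = 1 := by
  rw [← mul_pow]; simp

lemma E_zero_mul_T (β : Bool) (k : ℕ) (x : GR p) : E p β k 0 (x * TT p) = E p β k 0 x := by
  refine lin_ext (E p β k 0 ∘ₗ LinearMap.mulRight ℤ (TT p)) (E p β k 0) (fun g => ?_) x
  rw [LinearMap.comp_apply, LinearMap.mulRight_apply, TT, ← el_mul, E_el, E_el]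
  have : ((g * tau p : DihedralGroup p) : Cos p) = g :=
    QuotientGroup.mk_mul_of_mem g (Subgroup.mem_zpowers (tau p))
  cases β <;> simp only [cell, this]

lemma el_Htau (h : DihedralGroup p) (hh : h ∈ Htau p) : el h * Nn p (-1) = Nn p (-1) := by
  let S : Subgroup (DihedralGroup p) :=
    { carrier := {h | el h * Nn p (-1) = Nn p (-1)}
      one_mem' := by simp [el_one]
      mul_mem' := by
        intro a b ha hb
        simp only [Set.mem_ofPred_eq] at *
        rw [el_mul, mul_assoc, hb, ha]
      inv_mem' := by
        intro a ha
        simp only [Set.mem_ofPred_eq] at *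
        conv_lhs => rw [← ha]
        rw [← mul_assoc, ← el_mul, inv_mul_cancel, el_one, one_mul] }
  have : Htau p ≤ S := by
    rw [Htau, Subgroup.zpowers_le]
    change TT p * Nn p (-1) = Nn p (-1)
    rw [T_Nn (by norm_num)]; simp
  exact this hh

/-- The inclusion of the permutation module in the group ring. -/
def cosEl (q : Cos p) : GR p :=
  Quotient.liftOn' q (fun g => el g * Nn p (-1)) (by
    intro a b h
    rw [QuotientGroup.leftRel_apply] at h
    have := el_Htau _ h
    conv_lhs => rw [← this]
    rw [← mul_assoc, ← el_mul]; simp)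

/-- Left inverse helper -/
def backIdx : CIdx p → GR p
  | .a0 _ q => cosEl q
  | .b0 _ q => cosEl q
  | .a _ _ g => el g
  | .b _ _ g => el g
  | .c _ g => el g

def back (p : ℕ) : ChC p →ₗ[ℤ] GR p := Finsupp.lift (GR p) ℤ (CIdx p) backIdx

lemma back_single (c : CIdx p) : back p (single c 1) = backIdx c := by simp [back]

lemma back_E_zero (β : Bool) (k : ℕ) (x : GR p) : back p (E p β k 0 x) = x * Nn p (-1) := by
  refine lin_ext (back p ∘ₗ E p β k 0) (LinearMap.mulRight ℤ (Nn p (-1))) (fun g => ?_) x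
  rw [LinearMap.comp_apply, E_el, back_single]
  cases β <;> rfl

lemma back_E_succ (β : Bool) (k l : ℕ) (x : GR p) : back p (E p β k (l+1) x) = x := by
  refine lin_ext (back p ∘ₗ E p β k (l+1)) LinearMap.id (fun g => ?_) x
  rw [LinearMap.comp_apply, E_el, back_single]
  cases β <;> rfl

lemma back_Ec (k : ℕ) (x : GR p) : back p (Ec p k x) = x := by
  refine lin_ext (back p ∘ₗ Ec p k) LinearMap.id (fun g => ?_) x
  rw [LinearMap.comp_apply, Ec_el, back_single]
  rfl

lemma E_Mm_zero_iff (β : Bool) (k l : ℕ) (x : GR p) :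
    E p β k l (x * Mm p l) = 0 ↔ x * Nn p ((-1)^(l+1)) = 0 := by
  cases l with
  | zero =>
    rw [Mm_zero, mul_one]
    constructor
    · intro h
      have := congrArg (back p) h
      rw [back_E_zero, map_zero] at this
      simpa using this
    · intro h
      obtain ⟨u, rfl⟩ := Nn_exact (sgn_sq _) h
      simp only [zero_add, pow_one, neg_neg, Nn, one_smul, mul_sub, mul_one]
      rw [map_sub, E_zero_mul_T, sub_self]
  | succ l =>
    rw [Mm_succ]
    constructor
    · intro h
      have := congrArg (back p) h
      rwa [back_E_succ, map_zero] at this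
    · intro h; rw [h, map_zero]

lemma E_Mm_congr (β : Bool) (k l : ℕ) {x y : GR p}
    (h : x * Nn p ((-1)^(l+1)) = y * Nn p ((-1)^(l+1))) :
    E p β k l (x * Mm p l) = E p β k l (y * Mm p l) := by
  rw [← sub_eq_zero, ← map_sub, ← sub_mul, E_Mm_zero_iff, sub_mul, h, sub_self]

lemma E_Mm_Mm (β : Bool) (k l : ℕ) (x : GR p) : E p β k l (x * Mm p (l+1) * Mm p l) = 0 := by
  rw [E_Mm_zero_iff, Mm_succ, mul_assoc, show ((-1)^(l+2) : ℤ) = -((-1)^(l+1)) by ring,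
    Nn_neg (sgn_sq _), mul_zero]

/-- Exactness of a row. -/
lemma row_exact (β : Bool) (k l : ℕ) (x : GR p) (h : E p β k l (x * Mm p l) = 0) :
    ∃ u, x = u * Mm p (l+1) := by
  rw [E_Mm_zero_iff] at h
  obtain ⟨u, hu⟩ := Nn_exact (sgn_sq _) h
  refine ⟨u, ?_⟩
  rw [Mm_succ, hu]
  congr 2
  ring

lemma D_Df_zero (j k : ℕ) (x : GR p) : DC p j (Df p (k+1) 0 x) = 0 := by
  rw [Df_apply, map_sub]
  cases k with
  | zero => rw [D_E_one_zero, D_E_one_zero, sub_self]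
  | succ k => rw [D_E_zero, D_E_zero, sub_self]

lemma D_Df_succ (j k l : ℕ) (h : l + 1 < k) (x : GR p) :
    DC p j (Df p k (l+1) x) = - (((-1)^(k-l) : ℤ) • Df p k l (x * Mm p l)) := by
  obtain ⟨k, rfl⟩ : ∃ k', k = k' + 1 := ⟨k - 1, by omega⟩
  rw [Df_apply, map_sub, Df_apply]
  rcases Nat.lt_or_ge (l+1) k with h1 | h1
  · rw [D_E_mid j _ k l h1, D_E_mid j _ k l h1,
      show ((-1)^(k+1-l) : ℤ) = -(-1)^(k-l) by rw [show k + 1 - l = k - l + 1 by omega]; ring]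
    rw [neg_smul, neg_neg, smul_sub]
    abel
  · obtain rfl : k = l + 1 := by omega
    rw [D_E_top, D_E_top, show l + 1 + 1 - l = 2 by omega]
    simp only [even_two, Even.neg_pow, one_pow, one_smul]
    abel

lemma DD_E (hodd : Odd p) (j : ℕ) (β : Bool) (k l : ℕ) (h : l ≤ k) (x : GR p) :
    DC p j (DC p j (E p β (k+1) l x)) = 0 := by
  cases l with
  | zero =>
    cases k with
    | zero => rw [D_E_one_zero, map_zero]
    | succ k => rw [D_E_zero, D_Df_zero]
  | succ l =>
    rcases Nat.lt_or_ge (l+1) k with h1 | h1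
    · rw [D_E_mid j β k l h1, map_add, map_smul, D_Df_succ j k l h1]
      suffices DC p j (E p β (k+1) l (x * Mm p l)) = Df p k l (x * Mm p l) by
        rw [this]; abel
      cases l with
      | zero =>
        obtain ⟨k, rfl⟩ : ∃ k', k = k' + 1 := ⟨k - 1, by omega⟩
        rw [D_E_zero]
      | succ l =>
        rw [D_E_mid j β k l (by omega), E_Mm_Mm, smul_zero, zero_add]
    · obtain rfl : k = l + 1 := by omega
      rw [D_E_top, map_add, map_neg, D_Ec]
      have h2 : E p true (l+1) l (x * ss p j ((-1)^(l+1)) * Mm p l)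
          = - E p true (l+1) l (x * Mm p l) := by
        rw [← map_neg, ← neg_mul]
        refine E_Mm_congr _ _ _ ?_
        rw [mul_assoc, ss_Nn j (sgn_sq _)]; simp
      have h3 : E p false (l+1) l (x * ss p j ((-1)^(l+1)) * om p j * Mm p l)
          = - E p false (l+1) l (x * Mm p l) := by
        rw [← map_neg, ← neg_mul]
        refine E_Mm_congr _ _ _ ?_
        rw [mul_assoc, mul_assoc, ← mul_assoc (ss p j _), ss_om_Nn hodd j (sgn_sq _)]; simp
      rw [h2, h3]
      suffices DC p j (E p β (l+2) l (x * Mm p l)) = Df p (l+1) l (x * Mm p l) by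
        rw [this, Df_apply]; abel
      cases l with
      | zero => rw [D_E_zero]
      | succ l => rw [D_E_mid j β (l+2) l (by omega), E_Mm_Mm, smul_zero, zero_add]

lemma D_E_Mm (j : ℕ) (β : Bool) (l : ℕ) (x : GR p) :
    DC p j (E p β (l+2) (l+1) (x * Mm p (l+1))) =
      Ec p (l+1) (x * (Nn p (-(-1)^(l+1)) * ss p j ((-1)^(l+1)))) := by
  rw [D_E_top, E_Mm_Mm, neg_zero, zero_add, Mm_succ, mul_assoc,
    show ((-1)^(l+2) : ℤ) = -((-1)^(l+1)) by ring]

lemma DD_Ec (hp : p.Prime) (hodd : Odd p) {j : ℕ} (hj1 : 1 ≤ j) (hj2 : j ≤ p - 1) (k : ℕ)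
    (x : GR p) : DC p j (DC p j (Ec p (k+1) x)) = 0 := by
  rw [D_Ec, map_add, map_neg]
  cases k with
  | zero => rw [D_E_one_zero, D_E_one_zero]; simp
  | succ k =>
    rw [D_E_Mm, D_E_Mm, mul_assoc x, om_w hp hodd hj1 hj2 (sgn_sq _)]
    simp

lemma E_mem (β : Bool) {k l m n : ℕ} (h1 : l < k) (h2 : k ≤ m) (h3 : k + l = n + 1) (x : GR p) :
    E p β k l x ∈ Csub p m n := by
  refine gr_ind (P := fun x => E p β k l x ∈ Csub p m n) x (fun g => ?_) ?_ ?_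
  · rw [E_el]
    refine Finsupp.single_mem_supported ℤ 1 ?_
    cases β <;> cases l <;> simp only [cell, validC, degC, Set.mem_ofPred_eq] <;> omega
  · intro x y hx hy; rw [map_add]; exact add_mem hx hy
  · intro a x hx; rw [map_smul]; exact Submodule.smul_mem _ _ hx

lemma Ec_mem {k m n : ℕ} (h1 : k + 1 ≤ m) (h3 : 2 * k + 1 = n) (x : GR p) :
    Ec p (k+1) x ∈ Csub p m n := by
  refine gr_ind (P := fun x => Ec p (k+1) x ∈ Csub p m n) x (fun g => ?_) ?_ ?_
  · rw [Ec_el]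
    refine Finsupp.single_mem_supported ℤ 1 ?_
    simp only [validC, degC, Set.mem_ofPred_eq]
    omega
  · intro x y hx hy; rw [map_add]; exact add_mem hx hy
  · intro a x hx; rw [map_smul]; exact Submodule.smul_mem _ _ hx

lemma Csub_mono (m n : ℕ) : Csub p m n ≤ Csub p (m+1) n := by
  refine Finsupp.supported_mono ?_
  rintro c ⟨h1, h2⟩
  refine ⟨?_, h2⟩
  cases c <;> simp only [validC] at * <;> omega

lemma Csub_top {m n : ℕ} (h : 2 * m ≤ n) : Csub p m n = ⊥ := by
  rw [Csub, show {i : CIdx p | validC m i ∧ degC i = n} = ∅ from ?_, Finsupp.supported_empty]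
  ext c
  simp only [Set.mem_ofPred_eq, Set.mem_empty_iff_false, iff_false]
  cases c <;> simp only [validC, degC] at * <;> omega

lemma Csub_le_of {m n : ℕ} (S : Submodule ℤ (ChC p))
    (h : ∀ c : CIdx p, validC m c → degC c = n → single c (1:ℤ) ∈ S) : Csub p m n ≤ S := by
  rw [Csub, Finsupp.supported_eq_span_single, Submodule.span_le]
  rintro _ ⟨c, ⟨h1, h2⟩, rfl⟩
  exact h c h1 h2

lemma single_mem_Csub {m n : ℕ} (c : CIdx p) (h1 : validC m c) (h2 : degC c = n) :
    single c (1:ℤ) ∈ Csub p m n :=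
  Finsupp.single_mem_supported ℤ 1 ⟨h1, h2⟩

lemma Csub_low {m n : ℕ} (h : n < m) : Csub p (m+1) n ≤ Csub p m n := by
  refine Csub_le_of _ fun c h1 h2 => single_mem_Csub c ?_ h2
  cases c <;> simp only [validC, degC] at * <;> omega

lemma Csub_mid {m l : ℕ} (h : l ≤ m) {z : ChC p} (hz : z ∈ Csub p (m+1) (m+l)) :
    ∃ x y, ∃ w ∈ Csub p m (m+l), z = E p true (m+1) l x + E p false (m+1) l y + w := by
  have key : Csub p (m+1) (m+l) ≤ (LinearMap.range (E p true (m+1) l) ⊔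
      LinearMap.range (E p false (m+1) l)) ⊔ Csub p m (m+l) := by
    refine Csub_le_of _ fun c h1 h2 => ?_
    by_cases hv : validC m c
    · exact Submodule.mem_sup_right (single_mem_Csub c hv h2)
    · refine Submodule.mem_sup_left ?_
      cases c with
      | a0 k q =>
        refine Submodule.mem_sup_left ?_
        induction q using QuotientGroup.induction_on with
        | H g =>
        simp only [validC, degC] at *
        obtain rfl : k = m + 1 := by omega
        obtain rfl : l = 0 := by omega
        exact ⟨el g, by rw [E_el]; rfl⟩
      | b0 k q =>
        refine Submodule.mem_sup_right ?_
        induction q using QuotientGroup.induction_on with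
        | H g =>
        simp only [validC, degC] at *
        obtain rfl : k = m + 1 := by omega
        obtain rfl : l = 0 := by omega
        exact ⟨el g, by rw [E_el]; rfl⟩
      | a k l' g =>
        refine Submodule.mem_sup_left ?_
        simp only [validC, degC] at *
        obtain rfl : k = m + 1 := by omega
        obtain rfl : l = l' := by omega
        obtain ⟨l, rfl⟩ : ∃ i, l = i + 1 := ⟨l - 1, by omega⟩
        exact ⟨el g, by rw [E_el]; rfl⟩
      | b k l' g =>
        refine Submodule.mem_sup_right ?_
        simp only [validC, degC] at *
        obtain rfl : k = m + 1 := by omega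
        obtain rfl : l = l' := by omega
        obtain ⟨l, rfl⟩ : ∃ i, l = i + 1 := ⟨l - 1, by omega⟩
        exact ⟨el g, by rw [E_el]; rfl⟩
      | c k g =>
        simp only [validC, degC] at *
        omega
  obtain ⟨v, hv, w, hw, rfl⟩ := Submodule.mem_sup.1 (key hz)
  obtain ⟨_, ⟨x, rfl⟩, _, ⟨y, rfl⟩, rfl⟩ := Submodule.mem_sup.1 hv
  exact ⟨x, y, w, hw, rfl⟩

lemma Csub_c {m : ℕ} {z : ChC p} (hz : z ∈ Csub p (m+1) (2*m+1)) :
    ∃ x, z = Ec p (m+1) x := by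
  have key : Csub p (m+1) (2*m+1) ≤ LinearMap.range (Ec p (m+1)) := by
    refine Csub_le_of _ fun c h1 h2 => ?_
    cases c with
    | c k g =>
      simp only [validC, degC] at *
      obtain rfl : k = m + 1 := by omega
      exact ⟨el g, by rw [Ec_el]⟩
    | _ => simp only [validC, degC] at *; omega
  obtain ⟨x, rfl⟩ := key hz
  exact ⟨x, rfl⟩

/-- level of a cell -/
def lev : CIdx p → ℕ
  | .a0 k _ => k
  | .b0 k _ => k
  | .a k _ _ => k
  | .b k _ _ => k
  | .c k _ => k

/-- row of a cell -/
def row : CIdx p → Bool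
  | .a0 _ _ => true
  | .b0 _ _ => false
  | .a _ _ _ => true
  | .b _ _ _ => false
  | .c _ _ => true

lemma E_supp (β : Bool) (k l : ℕ) (x : GR p) :
    E p β k l x ∈ Finsupp.supported ℤ ℤ {c : CIdx p | lev c = k ∧ row c = β} := by
  refine gr_ind (P := fun x => E p β k l x ∈ Finsupp.supported ℤ ℤ
    {c : CIdx p | lev c = k ∧ row c = β}) x (fun g => ?_) ?_ ?_
  · rw [E_el]
    refine Finsupp.single_mem_supported ℤ 1 ?_
    cases β <;> cases l <;> exact ⟨rfl, rfl⟩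
  · intro x y hx hy; rw [map_add]; exact add_mem hx hy
  · intro a x hx; rw [map_smul]; exact Submodule.smul_mem _ _ hx

lemma Csub_supp (m n : ℕ) : Csub p m n ≤ Finsupp.supported ℤ ℤ {c : CIdx p | lev c ≤ m} := by
  refine Finsupp.supported_mono ?_
  rintro c ⟨h1, h2⟩
  cases c <;> simp only [validC, lev, Set.mem_ofPred_eq] at * <;> omega

lemma disj_zero {S S' : Set (CIdx p)} (hd : Disjoint S S') {a b : ChC p}
    (ha : a ∈ Finsupp.supported ℤ ℤ S) (hb : b ∈ Finsupp.supported ℤ ℤ S') (h : a + b = 0) :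
    a = 0 := by
  have := Finsupp.disjoint_supported_supported (M := ℤ) (R := ℤ) hd
  rw [Submodule.disjoint_def] at this
  refine this a ha ?_
  rw [eq_neg_of_add_eq_zero_left h]
  exact neg_mem hb

lemma indep {m n l : ℕ} {x y : GR p} {w : ChC p} (hw : w ∈ Csub p m n)
    (h : E p true (m+1) l x + E p false (m+1) l y + w = 0) :
    E p true (m+1) l x = 0 ∧ E p false (m+1) l y = 0 := by
  have hw := Csub_supp m n hw
  constructor
  · rw [add_assoc] at h
    refine disj_zero (S' := {c | (lev c = m+1 ∧ row c = false) ∨ lev c ≤ m}) ?_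
      (E_supp true (m+1) l x) (add_mem (Finsupp.supported_mono ?_ (E_supp false (m+1) l y))
        (Finsupp.supported_mono ?_ hw)) h
    · rw [Set.disjoint_left]
      rintro c ⟨h1, h2⟩ (⟨h3, h4⟩ | h3)
      · rw [h2] at h4; cases h4
      · omega
    · intro c hc; exact Or.inl hc
    · intro c hc; exact Or.inr hc
  · rw [add_right_comm, add_comm] at h
    refine disj_zero (S' := {c | (lev c = m+1 ∧ row c = true) ∨ lev c ≤ m}) ?_
      (E_supp false (m+1) l y) (add_mem (Finsupp.supported_mono ?_ (E_supp true (m+1) l x))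
        (Finsupp.supported_mono ?_ hw)) h
    · rw [Set.disjoint_left]
      rintro c ⟨h1, h2⟩ (⟨h3, h4⟩ | h3)
      · rw [h2] at h4; cases h4
      · omega
    · intro c hc; exact Or.inl hc
    · intro c hc; exact Or.inr hc

end chains

end DihedralCell

end

open DihedralGroup Finsupp

noncomputable section

namespace DihedralCell

section main
variable {p : ℕ}

lemma bndC_supp (j : ℕ) (c : CIdx p) (hc : 1 ≤ lev c) :
    bndC p j c ∈ Finsupp.supported ℤ ℤ {c' : CIdx p | lev c' ≤ lev c} := by
  have hs : ∀ (c' : CIdx p) (n : ℤ), lev c' ≤ lev c →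
      (single c' n : ChC p) ∈ Finsupp.supported ℤ ℤ {c' : CIdx p | lev c' ≤ lev c} :=
    fun c' n h => Finsupp.single_mem_supported ℤ n h
  cases c <;> simp only [bndC] <;> simp only [lev] at hc <;> split_ifs <;>
    repeat' first
      | exact Submodule.zero_mem _
      | apply Submodule.add_mem
      | apply Submodule.sub_mem
      | (apply Submodule.sum_mem; intro t _)
      | (apply hs; simp only [lev]; omega)

lemma D_supp (j m n : ℕ) {w : ChC p} (hw : w ∈ Csub p m n) :
    DC p j w ∈ Finsupp.supported ℤ ℤ {c : CIdx p | lev c ≤ m} := by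
  have : Csub p m n ≤ (Finsupp.supported ℤ ℤ {c : CIdx p | lev c ≤ m}).comap (DC p j) := by
    refine Csub_le_of _ fun c h1 h2 => ?_
    rw [Submodule.mem_comap, DC_single]
    refine Finsupp.supported_mono ?_ (bndC_supp j c (by cases c <;> simp only [validC, lev] at * <;> omega))
    intro c' hc'
    refine le_trans (show lev c' ≤ lev c from hc') ?_
    cases c <;> simp only [validC, lev] at * <;> omega
  exact this hw

/-- Independence with supports. -/
lemma indep' {m l : ℕ} {x y : GR p} {w : ChC p}
    (hw : w ∈ Finsupp.supported ℤ ℤ {c : CIdx p | lev c ≤ m})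
    (h : E p true (m+1) l x + E p false (m+1) l y + w = 0) :
    E p true (m+1) l x = 0 ∧ E p false (m+1) l y = 0 := by
  constructor
  · rw [add_assoc] at h
    refine disj_zero (S' := {c | (lev c = m+1 ∧ row c = false) ∨ lev c ≤ m}) ?_
      (E_supp true (m+1) l x) (add_mem (Finsupp.supported_mono ?_ (E_supp false (m+1) l y))
        (Finsupp.supported_mono ?_ hw)) h
    · rw [Set.disjoint_left]
      rintro c ⟨h1, h2⟩ (⟨h3, h4⟩ | h3)
      · rw [h2] at h4; cases h4
      · omega
    · intro c hc; exact Or.inl hc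
    · intro c hc; exact Or.inr hc
  · rw [add_right_comm, add_comm] at h
    refine disj_zero (S' := {c | (lev c = m+1 ∧ row c = true) ∨ lev c ≤ m}) ?_
      (E_supp false (m+1) l y) (add_mem (Finsupp.supported_mono ?_ (E_supp true (m+1) l x))
        (Finsupp.supported_mono ?_ hw)) h
    · rw [Set.disjoint_left]
      rintro c ⟨h1, h2⟩ (⟨h3, h4⟩ | h3)
      · rw [h2] at h4; cases h4
      · omega
    · intro c hc; exact Or.inl hc
    · intro c hc; exact Or.inr hc

lemma D_E_low (j : ℕ) (k l : ℕ) (h : l + 1 ≤ k) :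
    ∃ s : ℤ, s * s = 1 ∧ ∀ (β : Bool) (x : GR p), ∃ S ∈ Csub p k (k+l),
      DC p j (E p β (k+1) (l+1) x) = s • E p β (k+1) l (x * Mm p l) + S := by
  rcases Nat.lt_or_ge (l+1) k with h1 | h1
  · refine ⟨(-1)^(k-l), sgn_sq _, fun β x => ⟨_, ?_, D_E_mid j β k l h1 x⟩⟩
    rw [Df_apply]
    exact sub_mem (E_mem _ (by omega) le_rfl (by omega) _) (E_mem _ (by omega) le_rfl (by omega) _)
  · obtain rfl : k = l + 1 := by omega
    refine ⟨-1, by norm_num, fun β x => ⟨_, ?_, by rw [D_E_top, neg_one_smul]⟩⟩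
    exact Ec_mem le_rfl (by omega) _

lemma Ta_T (β : Bool) (k : ℕ) (x : GR p) :
    E p β (k+1) k (x * TT p * Mm p k) = -((-1)^(k+1) : ℤ) • E p β (k+1) k (x * Mm p k) := by
  rw [← map_smul, ← smul_mul_assoc]
  refine E_Mm_congr _ _ _ ?_
  rw [mul_assoc, T_Nn (sgn_sq _), smul_mul_assoc, mul_neg, mul_smul_comm, neg_smul]

lemma Ta_step (j k : ℕ) (y : GR p) :
    DC p j (Ec p (k+1) ((y + ((-1)^(k+1) : ℤ) • (y * TT p)) * om' p j)) =
      E p true (k+1) k (y * om p j * Mm p k) - E p true (k+1) k (y * om' p j * Mm p k) := by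
  rw [D_Ec, mul_assoc _ (om' p j) (om p j), om'_om, mul_one]
  have h1 : E p false (k+1) k ((y + ((-1)^(k+1) : ℤ) • (y * TT p)) * Mm p k) = 0 := by
    rw [add_mul, smul_mul_assoc, map_add, map_smul, Ta_T, smul_smul, mul_neg, sgn_sq]
    simp
  have h2 : E p true (k+1) k ((y + ((-1)^(k+1) : ℤ) • (y * TT p)) * om' p j * Mm p k) =
      E p true (k+1) k (y * om' p j * Mm p k) - E p true (k+1) k (y * om p j * Mm p k) := by
    rw [add_mul, add_mul, smul_mul_assoc, smul_mul_assoc, mul_assoc y (TT p), T_om', ← mul_assoc y,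
      map_add, map_smul, Ta_T, smul_smul, mul_neg, sgn_sq, neg_one_smul, sub_eq_add_neg]
  rw [h1, h2, add_zero, neg_sub]

lemma gen_pow (hodd : Odd p) (j k : ℕ) (n : ℕ) :
    ∃ v, E p true (k+1) k (om p j ^ n * Mm p k) =
      DC p j (Ec p (k+1) v) + E p true (k+1) k (Mm p k) := by
  have h : ∀ n : ℕ, ∃ v, E p true (k+1) k (om p j ^ (2 * n) * Mm p k) =
      DC p j (Ec p (k+1) v) + E p true (k+1) k (Mm p k) := by
    intro n
    induction n with
    | zero => exact ⟨0, by simp⟩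
    | succ n ih =>
      obtain ⟨v, hv⟩ := ih
      refine ⟨(om p j ^ (2*n+1) + ((-1)^(k+1) : ℤ) • (om p j ^ (2*n+1) * TT p)) * om' p j + v, ?_⟩
      rw [map_add, map_add, Ta_step, ← pow_succ, pow_succ _ (2*n), mul_assoc _ (om p j) (om' p j),
        om_om', mul_one, hv, show 2 * (n+1) = 2 * n + 1 + 1 by ring]
      abel
  obtain ⟨v, hv⟩ := h (n * ((p+1)/2))
  refine ⟨v, ?_⟩
  rw [← hv]
  have : 2 * (n * ((p+1)/2)) = p * n + n := by
    have : 2 * ((p+1)/2) = p + 1 := by obtain ⟨q, rfl⟩ := hodd; omega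
    calc _ = n * (2 * ((p+1)/2)) := by ring
      _ = _ := by rw [this]; ring
  rw [this, pow_add, pow_mul, om_pow_p, one_pow, one_mul]

lemma gen_a (hp : p.Prime) (hodd : Odd p) {j : ℕ} (hj1 : 1 ≤ j) (hj2 : j ≤ p - 1) (k : ℕ)
    (x : GR p) : ∃ (v : GR p) (t : ℤ), E p true (k+1) k (x * Mm p k) =
      DC p j (Ec p (k+1) v) + t • E p true (k+1) k (Mm p k) := by
  have hr : ∀ i : ZMod p, ∃ v, E p true (k+1) k (el (r i) * Mm p k) =
      DC p j (Ec p (k+1) v) + E p true (k+1) k (Mm p k) := by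
    intro i
    obtain ⟨n, hn⟩ := omg_gen hp hodd hj1 hj2 i
    rw [← hn, el_pow]
    exact gen_pow hodd j k n
  refine gr_ind (P := fun x => ∃ (v : GR p) (t : ℤ), E p true (k+1) k (x * Mm p k) =
      DC p j (Ec p (k+1) v) + t • E p true (k+1) k (Mm p k)) x (fun g => ?_) ?_ ?_
  · cases g with
    | r i =>
      obtain ⟨v, hv⟩ := hr i
      exact ⟨v, 1, by rw [hv, one_smul]⟩
    | sr i =>
      obtain ⟨v, hv⟩ := hr (-i)
      refine ⟨(-((-1)^(k+1) : ℤ)) • v, -((-1)^(k+1) : ℤ), ?_⟩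
      rw [show (sr i : DihedralGroup p) = r (-i) * tau p by simp [tau], el_mul, ← TT, Ta_T, hv,
        smul_add, map_smul, map_smul]
  · rintro x y ⟨v, t, h⟩ ⟨v', t', h'⟩
    refine ⟨v + v', t + t', ?_⟩
    rw [add_mul, map_add, h, h', map_add, map_add, add_smul]; abel
  · rintro n x ⟨v, t, h⟩
    refine ⟨n • v, n * t, ?_⟩
    rw [smul_mul_assoc, map_smul, h, smul_add, map_smul, map_smul, smul_smul]

lemma gen_ab (hp : p.Prime) (hodd : Odd p) {j : ℕ} (hj1 : 1 ≤ j) (hj2 : j ≤ p - 1) (k : ℕ)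
    (x y : GR p) : ∃ (v : GR p) (t : ℤ),
      E p true (k+1) k (x * Mm p k) + E p false (k+1) k (y * Mm p k) =
      DC p j (Ec p (k+1) v) + t • E p true (k+1) k (Mm p k) := by
  obtain ⟨v, t, h⟩ := gen_a hp hodd hj1 hj2 k (x + y * om' p j)
  refine ⟨y * om' p j + v, t, ?_⟩
  rw [map_add, map_add, add_assoc, ← h, D_Ec, mul_assoc y (om' p j) (om p j), om'_om, mul_one,
    add_mul, map_add]
  abel

/-- Top-degree cycles. -/
lemma top_cycle {j m : ℕ} {z : ChC p} (hz : z ∈ Csub p (m+1) (2*m+1))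
    (hD : DC p j z = 0) : ∃ x, z = Ec p (m+1) x ∧ x * Nn p ((-1)^(m+1)) = 0 ∧
      x * om p j * Nn p ((-1)^(m+1)) = 0 := by
  obtain ⟨x, rfl⟩ := Csub_c hz
  refine ⟨x, rfl, ?_⟩
  rw [D_Ec, ← map_neg] at hD
  have := indep' (m := m) (w := 0) (zero_mem _) (by rw [add_zero]; exact hD)
  rw [map_neg, neg_eq_zero, E_Mm_zero_iff, E_Mm_zero_iff] at this
  exact this

/-- coefficient of the identity cell -/
def topf (p : ℕ) : ChC p →ₗ[ℤ] ℤ :=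
  Finsupp.lapply 1 ∘ₗ (MonoidAlgebra.coeffLinearEquiv ℤ).toLinearMap ∘ₗ back p

lemma topf_Ec (k : ℕ) (x : GR p) : topf p (Ec p k x) = x.coeff 1 := by
  rw [topf, LinearMap.comp_apply, LinearMap.comp_apply, back_Ec]; rfl

lemma top_cycle_zero (hp : p.Prime) (hodd : Odd p) {j : ℕ} (hj1 : 1 ≤ j) (hj2 : j ≤ p - 1)
    {m : ℕ} {z : ChC p} (hz : z ∈ Csub p (m+1) (2*m+1))
    (hD : DC p j z = 0) (h0 : topf p z = 0) : z = 0 := by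
  obtain ⟨x, rfl, h1, h2⟩ := top_cycle hz hD
  rw [topf_Ec] at h0
  rw [cyc_zero hp hodd hj1 hj2 (sgn_sq _) h1 h2 h0, map_zero]

/-- The fundamental cycle (up to sign). -/
def fund (p j m : ℕ) : ChC p := DC p j (E p true (m+2) (m+1) (Mm p (m+1)))

lemma fund_eq (j m : ℕ) :
    fund p j m = Ec p (m+1) (Nn p (-(-1)^(m+1)) * ss p j ((-1)^(m+1))) := by
  have := D_E_Mm (p := p) j true m 1
  rw [one_mul, one_mul] at this
  exact this

lemma fund_mem (j m : ℕ) : fund p j m ∈ Csub p (m+1) (2*m+1) := by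
  rw [fund_eq]; exact Ec_mem le_rfl rfl _

lemma fund_cycle (hodd : Odd p) (j m : ℕ) : DC p j (fund p j m) = 0 :=
  DD_E hodd j true (m+1) (m+1) le_rfl _

lemma topf_fund (hp : p.Prime) {j : ℕ} (hj1 : 1 ≤ j) (hj2 : j ≤ p - 1)
    (m : ℕ) : topf p (fund p j m) = -1 := by
  rw [fund_eq, topf_Ec, coeff_w hp hj1 hj2 (sgn_sq _)]

lemma top_cycle_bdry (hp : p.Prime) (hodd : Odd p) {j : ℕ} (hj1 : 1 ≤ j) (hj2 : j ≤ p - 1)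
    {m : ℕ} {z : ChC p} (hz : z ∈ Csub p (m+1) (2*m+1))
    (hD : DC p j z = 0) : z = -(topf p z • fund p j m) := by
  rw [eq_neg_iff_add_eq_zero]
  refine top_cycle_zero hp hodd hj1 hj2 (add_mem hz (Submodule.smul_mem _ _ (fund_mem j m))) ?_ ?_
  · rw [map_add, map_smul, hD, fund_cycle hodd]; simp
  · rw [map_add, map_smul, topf_fund hp hj1 hj2]; simp

lemma vanish (hp : p.Prime) (hodd : Odd p) {j : ℕ} (hj1 : 1 ≤ j) (hj2 : j ≤ p - 1) (m : ℕ) :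
    ∀ n, 0 < n → n < 2 * m + 1 → ∀ z ∈ Csub p (m+1) n, DC p j z = 0 →
      ∃ u ∈ Csub p (m+1) (n+1), DC p j u = z := by
  induction m with
  | zero => intro n h1 h2; omega
  | succ m ih =>
    intro n hn1 hn2 z hz hD
    have red : ∀ z ∈ Csub p (m+1) n, DC p j z = 0 → n ≤ 2*m+1 →
        ∃ u ∈ Csub p (m+1+1) (n+1), DC p j u = z := by
      intro z hz hD hn
      rcases Nat.lt_or_ge n (2*m+1) with h | h
      · obtain ⟨u, hu, h⟩ := ih n hn1 h z hz hD
        exact ⟨u, Csub_mono _ _ hu, h⟩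
      · obtain rfl : n = 2*m+1 := by omega
        refine ⟨-(topf p z • E p true (m+2) (m+1) (Mm p (m+1))), ?_, ?_⟩
        · exact neg_mem (Submodule.smul_mem _ _ (E_mem _ (by omega) le_rfl (by omega) _))
        · rw [map_neg, map_smul]
          exact (top_cycle_bdry hp hodd hj1 hj2 hz hD).symm
    rcases Nat.lt_or_ge n (m+1) with h | h
    · exact red z (Csub_low h hz) hD (by omega)
    · obtain ⟨l, rfl⟩ : ∃ l, n = m + 1 + l := ⟨n - (m+1), by omega⟩
      have hl : l ≤ m + 1 := by omega
      obtain ⟨x, y, w, hw, rfl⟩ := Csub_mid hl hz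
      -- the components are row boundaries
      have hxy : (∃ u, x = u * Mm p l) ∧ (∃ u, y = u * Mm p l) := by
        cases l with
        | zero => exact ⟨⟨x, by rw [Mm_zero, mul_one]⟩, ⟨y, by rw [Mm_zero, mul_one]⟩⟩
        | succ l =>
          obtain ⟨s, hs, hE⟩ := D_E_low (p := p) j (m+1) l hl
          obtain ⟨S1, hS1, h1⟩ := hE true x
          obtain ⟨S2, hS2, h2⟩ := hE false y
          rw [map_add, map_add, h1, h2, ← map_smul, ← map_smul, ← smul_mul_assoc,
            ← smul_mul_assoc] at hD
          have := indep' (m := m+1) (w := S1 + S2 + DC p j w)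
            (add_mem (add_mem (Csub_supp _ _ hS1) (Csub_supp _ _ hS2)) (D_supp j _ _ hw))
            (by rw [← hD]; abel)
          obtain ⟨u1, hu1⟩ := row_exact _ _ _ _ this.1
          obtain ⟨u2, hu2⟩ := row_exact _ _ _ _ this.2
          refine ⟨⟨s • u1, ?_⟩, ⟨s • u2, ?_⟩⟩
          · rw [smul_mul_assoc, ← hu1, smul_smul, hs, one_smul]
          · rw [smul_mul_assoc, ← hu2, smul_smul, hs, one_smul]
      obtain ⟨⟨u1, rfl⟩, ⟨u2, rfl⟩⟩ := hxy
      rcases Nat.lt_or_ge l (m+1) with h' | h'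
      · obtain ⟨s, hs, hE⟩ := D_E_low (p := p) j (m+1) l h'
        obtain ⟨S1, hS1, h1⟩ := hE true (s • u1)
        obtain ⟨S2, hS2, h2⟩ := hE false (s • u2)
        rw [smul_mul_assoc, map_smul (E p true (m+1+1) l), smul_smul, hs, one_smul] at h1
        rw [smul_mul_assoc, map_smul (E p false (m+1+1) l), smul_smul, hs, one_smul] at h2
        have d1 := DD_E hodd j true (m+1) (l+1) h' (s • u1)
        have d2 := DD_E hodd j false (m+1) (l+1) h' (s • u2)
        obtain ⟨u, hu, hDu⟩ := red (w - S1 - S2) (sub_mem (sub_mem hw hS1) hS2) (by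
          have e : w - S1 - S2 = (E p true (m+1+1) l (u1 * Mm p l) +
              E p false (m+1+1) l (u2 * Mm p l) + w)
              - DC p j (E p true (m+1+1) (l+1) (s • u1))
              - DC p j (E p false (m+1+1) (l+1) (s • u2)) := by
            rw [h1, h2]; abel
          rw [e, map_sub, map_sub, hD, d1, d2]; simp) (by omega)
        refine ⟨u + E p true (m+1+1) (l+1) (s • u1) + E p false (m+1+1) (l+1) (s • u2), ?_, ?_⟩
        · exact add_mem (add_mem hu (E_mem _ (by omega) le_rfl (by omega) _))
            (E_mem _ (by omega) le_rfl (by omega) _)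
        · rw [map_add, map_add, hDu, h1, h2]; abel
      · obtain rfl : l = m + 1 := by omega
        rw [Csub_top (by omega), Submodule.mem_bot] at hw
        subst hw
        obtain ⟨v, t, h1⟩ := gen_ab hp hodd hj1 hj2 (m+1) u1 u2
        rw [add_zero, h1] at hD
        rw [map_add, DD_Ec hp hodd hj1 hj2, zero_add, map_smul] at hD
        have h2 := congrArg (topf p) hD
        rw [map_smul] at h2
        have h3 := topf_fund hp hj1 hj2 (p := p) m
        rw [fund] at h3
        rw [h3, map_zero] at h2
        have ht : t = 0 := by simpa using h2
        refine ⟨Ec p (m+1+1) v, Ec_mem le_rfl (by omega) v, ?_⟩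
        rw [add_zero, h1, ht, zero_smul, add_zero]

/-- The augmentation on cells. -/
def augIdx : CIdx p → ℤ
  | .a0 k _ => if k = 1 then 1 else 0
  | .b0 k _ => if k = 1 then 1 else 0
  | _ => 0

/-- The augmentation. -/
def aug (p : ℕ) : ChC p →ₗ[ℤ] ℤ := Finsupp.lift ℤ ℤ (CIdx p) augIdx

lemma aug_single (c : CIdx p) (n : ℤ) : aug p (single c n) = n * augIdx c := by
  simp [aug]

lemma aug_D (j m : ℕ) {u : ChC p} (hu : u ∈ Csub p m 1) : aug p (DC p j u) = 0 := by
  have : Csub p m 1 ≤ LinearMap.ker (aug p ∘ₗ DC p j) := by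
    refine Csub_le_of _ fun c h1 h2 => ?_
    rw [LinearMap.mem_ker, LinearMap.comp_apply, DC_single]
    cases c with
    | a0 k q =>
      simp only [validC, degC] at *
      obtain rfl : k = 2 := by omega
      simp [bndC, aug_single, augIdx]
    | b0 k q =>
      simp only [validC, degC] at *
      obtain rfl : k = 2 := by omega
      simp [bndC, aug_single, augIdx]
    | c k g =>
      simp only [validC, degC] at *
      obtain rfl : k = 1 := by omega
      simp [bndC, aug_single, augIdx]
    | _ => simp only [validC, degC] at *; omega
  exact this hu

lemma Csub_deg_zero (m : ℕ) : Csub p (m+1) 0 ≤ Csub p 1 0 := by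
  refine Csub_le_of _ fun c h1 h2 => single_mem_Csub c ?_ h2
  cases c <;> simp only [validC, degC] at * <;> omega

lemma Csub_mono' {m m' : ℕ} (h : m ≤ m') (n : ℕ) : Csub p m n ≤ Csub p m' n := by
  induction h with
  | refl => exact le_rfl
  | step _ ih => exact ih.trans (Csub_mono _ _)

lemma aug_one : aug p (E p true 1 0 1) = 1 := by
  rw [← el_one, E_el, aug_single]; simp [cell, augIdx]

lemma deg_zero (hp : p.Prime) (hodd : Odd p) {j : ℕ} (hj1 : 1 ≤ j) (hj2 : j ≤ p - 1) (m : ℕ)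
    {z : ChC p} (hz : z ∈ Csub p (m+1) 0) (h0 : aug p z = 0) :
    ∃ u ∈ Csub p (m+1) 1, DC p j u = z := by
  obtain ⟨x, y, w, hw, rfl⟩ := Csub_mid (m := 0) (l := 0) le_rfl (Csub_deg_zero m hz)
  rw [Csub_top (by omega), Submodule.mem_bot] at hw
  subst hw
  obtain ⟨v, t, h⟩ := gen_ab hp hodd hj1 hj2 0 x y
  simp only [Mm_zero, mul_one] at h
  rw [add_zero, h, map_add, map_smul] at h0
  have hv : Ec p (0+1) v ∈ Csub p (m+1) 1 := Ec_mem (by omega) (by omega) v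
  rw [aug_D j _ hv, zero_add, aug_one] at h0
  have ht : t = 0 := by simpa using h0
  refine ⟨_, hv, ?_⟩
  rw [add_zero, h, ht, zero_smul, add_zero]

lemma hc_iso (m j n : ℕ) (f : ChC p →ₗ[ℤ] ℤ)
    (hker : ∀ z ∈ ZcC p m j n, f z = 0 ↔ z ∈ Submodule.map (DC p j) (Csub p m (n+1)))
    (z0 : ChC p) (hz0 : z0 ∈ ZcC p m j n) (h1 : f z0 = 1) :
    Nonempty (HcC p m j n ≃ₗ[ℤ] ℤ) := by
  let F : ↥(ZcC p m j n) →ₗ[ℤ] ℤ := f ∘ₗ (ZcC p m j n).subtype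
  have hk : Submodule.comap (ZcC p m j n).subtype
      (Submodule.map (DC p j) (Csub p m (n+1))) = LinearMap.ker F := by
    ext ⟨z, hz⟩
    exact (hker z hz).symm
  have hs : Function.Surjective F := by
    intro n
    refine ⟨n • ⟨z0, hz0⟩, ?_⟩
    rw [map_smul]
    change n • f z0 = n
    rw [h1]; simp
  exact ⟨(Submodule.quotEquivOfEq _ _ hk).trans (F.quotKerEquivOfSurjective hs)⟩

lemma hc_zero (m j n : ℕ)
    (h : ∀ z ∈ ZcC p m j n, z ∈ Submodule.map (DC p j) (Csub p m (n+1))) :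
    Nonempty (HcC p m j n ≃ₗ[ℤ] ZMod 1) := by
  have hk : Submodule.comap (ZcC p m j n).subtype
      (Submodule.map (DC p j) (Csub p m (n+1))) = ⊤ := by
    rw [eq_top_iff]
    rintro ⟨z, hz⟩ _
    exact h z hz
  have hsub : Subsingleton (HcC p m j n) := by
    unfold HcC
    exact Submodule.Quotient.subsingleton_iff.2 hk
  exact ⟨{ toFun := fun _ => 0
           map_add' := fun _ _ => by simp
           map_smul' := fun _ _ => by simp
           invFun := fun _ => 0
           left_inv := fun _ => Subsingleton.elim _ _
           right_inv := fun _ => Subsingleton.elim _ _ }⟩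

end main

end DihedralCell

end

open DihedralCell in
/-- The homology of the underlying chain complex of abelian groups of the
dihedral cellular complex `C(j)` is that of the sphere `S^{2m-1}`: `H_n ≅ ℤ` for `n = 0`
and `n = 2m-1`, and `H_n = 0` otherwise. (`ZMod 0 = ℤ`, `ZMod 1 = 0`.) -/
theorem dihedral_cellular_homology_of_sphere
    (p : ℕ) (hp : p.Prime) (hodd : Odd p)
    (j : ℕ) (hj1 : 1 ≤ j) (hj2 : j ≤ p - 1)
    (m : ℕ) (hm : 1 ≤ m) :
    ∀ n : ℕ, Nonempty (HcC p m j n ≃ₗ[ℤ]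
      ZMod (if n = 0 ∨ n = 2 * m - 1 then 0 else 1)) := by
  intro n
  obtain ⟨m, rfl⟩ : ∃ k, m = k + 1 := ⟨m - 1, by omega⟩
  by_cases h0 : n = 0
  · subst h0
    rw [if_pos (Or.inl rfl)]
    refine hc_iso (m+1) j 0 (aug p) (fun z hz => ⟨fun h => ?_, ?_⟩) (E p true 1 0 1) ⟨?_, ?_⟩ aug_one
    · obtain ⟨u, hu, hD⟩ := deg_zero hp hodd hj1 hj2 m hz.1 h
      exact ⟨u, hu, hD⟩
    · rintro ⟨u, hu, rfl⟩
      exact aug_D j _ hu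
    · exact E_mem _ (by omega) (by omega) (by omega) _
    · exact D_E_one_zero j true 1
  by_cases h1 : n = 2 * (m + 1) - 1
  · rw [if_pos (Or.inr h1)]
    obtain rfl : n = 2 * m + 1 := by omega
    refine hc_iso (m+1) j (2*m+1) (topf p) (fun z hz => ?_) (-fund p j m) ⟨?_, ?_⟩ ?_
    · rw [Csub_top (by omega), Submodule.map_bot, Submodule.mem_bot]
      refine ⟨fun h => top_cycle_zero hp hodd hj1 hj2 hz.1 hz.2 h, ?_⟩
      rintro rfl
      exact map_zero _
    · exact neg_mem (fund_mem j m)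
    · change DC p j (-fund p j m) = 0
      rw [map_neg, fund_cycle hodd, neg_zero]
    · rw [map_neg, topf_fund hp hj1 hj2, neg_neg]
  · rw [if_neg (by tauto)]
    refine hc_zero _ _ _ fun z hz => ?_
    rcases Nat.lt_or_ge n (2*m+1) with h | h
    · obtain ⟨u, hu, hD⟩ := vanish hp hodd hj1 hj2 m n (by omega) h z hz.1 hz.2
      exact ⟨u, hu, hD⟩
    · have h2 : z ∈ Csub p (m+1) n := hz.1
      rw [Csub_top (by omega), Submodule.mem_bot] at h2
      rw [h2]; exact zero_mem _
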